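/- Let T : ℕ → ℚ⟦X⟧ be the sequence of formal power series defined by T 0 = 0 and T (k+1) = X·(1 − T k)⁻¹. Then for every natural number k, one has (1 − T k − T (k+1))·F_{k+1}·F_{k+2} = F_{2k+3} in ℚ⟦X⟧, where the Fibonacci polynomials are regarded as formal power series. -/

import Mathlib

open PowerSeries

/-- The Fibonacci polynomials: `F 0 = 0`, `F 1 = 1`, `F (k+2) = F (k+1) - X * F k`. -/
noncomputable def fibPoly : ℕ → Polynomial ℤ
  | 0 => 0
  | 1 => 1
  | (k + 2) => fibPoly (k + 1) - Polynomial.X * fibPoly k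

/-- The Fibonacci polynomials regarded as formal power series over `ℚ`. -/
noncomputable def fibPS (k : ℕ) : PowerSeries ℚ :=
  (((fibPoly k).map (Int.castRingHom ℚ) : Polynomial ℚ) : PowerSeries ℚ)

/-- The generating function of ordered trees of height at most `k`:
`T 0 = 0`, `T (k+1) = X * (1 - T k)⁻¹`. -/
noncomputable def treeGF : ℕ → PowerSeries ℚ
  | 0 => 0
  | (k + 1) => PowerSeries.X * (1 - treeGF k)⁻¹

theorem fibPS_zero : fibPS 0 = 0 := by simp [fibPS, fibPoly]

theorem fibPS_one : fibPS 1 = 1 := by simp [fibPS, fibPoly]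

theorem fibPS_add_two (k : ℕ) :
    fibPS (k + 2) = fibPS (k + 1) - PowerSeries.X * fibPS k := by
  simp [fibPS, fibPoly]

theorem fibPS_add (m n : ℕ) :
    fibPS (m + n + 1) = fibPS (m + 1) * fibPS (n + 1) - PowerSeries.X * fibPS m * fibPS n := by
  induction n generalizing m with
  | zero => simp [fibPS_zero, fibPS_one]
  | succ n ih =>
    have h := ih (m + 1)
    rw [show m + (n + 1) + 1 = m + 1 + n + 1 by ring, h, fibPS_add_two n, fibPS_add_two m]
    ring

theorem treeGF_constantCoeff (k : ℕ) : PowerSeries.constantCoeff (treeGF k) = 0 := by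
  cases k <;> simp [treeGF]

theorem treeGF_mul_fibPS (k : ℕ) :
    treeGF k * fibPS (k + 1) = PowerSeries.X * fibPS k := by
  induction k with
  | zero => simp [treeGF, fibPS_zero]
  | succ k ih =>
    have h : (1 - treeGF k)⁻¹ * (1 - treeGF k) = 1 :=
      PowerSeries.inv_mul_cancel _ (by simp [treeGF_constantCoeff])
    have h2 : fibPS (k + 1 + 1) = (1 - treeGF k) * fibPS (k + 1) := by
      rw [sub_mul, ih, one_mul]; exact fibPS_add_two k
    rw [h2, treeGF]
    linear_combination PowerSeries.X * fibPS (k + 1) * h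

theorem one_sub_treeGF_sub_treeGF_mul_fib (k : ℕ) :
    (1 - treeGF k - treeGF (k + 1)) * fibPS (k + 1) * fibPS (k + 2) =
      fibPS (2 * k + 3) := by
  have h1 := treeGF_mul_fibPS k
  have h2 : treeGF (k + 1) * fibPS (k + 2) = _ := treeGF_mul_fibPS (k + 1)
  have h3 : fibPS (k + 1 + (k + 1) + 1) = fibPS (k + 2) * fibPS (k + 2) - _ :=
    fibPS_add (k + 1) (k + 1)
  rw [show 2 * k + 3 = k + 1 + (k + 1) + 1 by ring, h3]
  linear_combination (-fibPS (k + 2)) * h1 - fibPS (k + 1) * h2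
    - fibPS (k + 2) * fibPS_add_two k
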